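/- Let D ⊆ [n]² be a diagram with columns D_j = {i : (i,j) ∈ D}. Then the set of lattice points of the Schubitope S_D is exactly { ξ^C : C = (C_1,...,C_n), C_j ≤ D_j for all j }, where ξ^C_i = #{ j : i ∈ C_j }. In particular, every lattice point of S_D satisfies all the defining inequalities with the associated combinatorial witness, and S_D is the convex hull of this set of lattice points. -/

import Mathlib

open Finset

/-- `DomLE R S`: `R` and `S` have the same cardinality and, for each `k`, the `k`-th least
element of `R` does not exceed the `k`-th least element of `S`.  The bases of the Schubert
matroid `SM_n(S)` are exactly the `B` with `DomLE B S`. -/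
def DomLE {α : Type*} [LinearOrder α] (R S : Finset α) : Prop :=
  R.card = S.card ∧
    ∀ (k : ℕ) (hR : k < (R.sort (· ≤ ·)).length) (hS : k < (S.sort (· ≤ ·)).length),
      (R.sort (· ≤ ·)).get ⟨k, hR⟩ ≤ (S.sort (· ≤ ·)).get ⟨k, hS⟩

/-- Auxiliary greedy matching count for a parenthesis word (`true` = '(', `false` = ')'),
given the current number of unmatched open parentheses. -/
def matchedPairsAux : List Bool → ℕ → ℕ
  | [], _ => 0
  | true :: rest, o => matchedPairsAux rest (o + 1)
  | false :: rest, 0 => matchedPairsAux rest 0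
  | false :: rest, o + 1 => matchedPairsAux rest o + 1

/-- The number of paired `()`'s in a parenthesis word (`true` = '(', `false` = ')'). -/
def matchedPairs (w : List Bool) : ℕ := matchedPairsAux w 0

/-- Column `j` of a diagram `D ⊆ [n]²`: the set `D_j = {i : (i,j) ∈ D}`. -/
def colSet {n : ℕ} (D : Finset (Fin n × Fin n)) (j : Fin n) : Finset (Fin n) :=
  Finset.univ.filter fun i => (i, j) ∈ D

/-- The parenthesis part of `word_{j,I}(D)`: reading rows `i` from top to bottom, record
'(' (= `true`) if `(i,j) ∉ D` and `i ∈ I`, and ')' (= `false`) if `(i,j) ∈ D` and `i ∉ I`.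
(The `⋆`'s, at positions with `(i,j) ∈ D` and `i ∈ I`, play no role in the matching.) -/
def colWord {n : ℕ} (D : Finset (Fin n × Fin n)) (j : Fin n) (I : Finset (Fin n)) :
    List Bool :=
  (List.finRange n).filterMap fun i =>
    if (i, j) ∈ D then (if i ∈ I then none else some false)
    else (if i ∈ I then some true else none)

/-- `θ_D^j(I)`: the number of paired `()`'s plus the number of `⋆`'s in `word_{j,I}(D)`. -/
def thetaCol {n : ℕ} (D : Finset (Fin n × Fin n)) (j : Fin n) (I : Finset (Fin n)) : ℕ :=
  matchedPairs (colWord D j I) + (colSet D j ∩ I).card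

/-- `θ_D(I) = Σ_{j=1}^n θ_D^j(I)`. -/
def theta {n : ℕ} (D : Finset (Fin n × Fin n)) (I : Finset (Fin n)) : ℕ :=
  ∑ j : Fin n, thetaCol D j I

/-- The Schubitope `S_D` of a diagram `D ⊆ [n]²`. -/
def schubitope {n : ℕ} (D : Finset (Fin n × Fin n)) : Set (Fin n → ℝ) :=
  {a | (∀ i, 0 ≤ a i) ∧ (∑ i, a i) = (D.card : ℝ) ∧
    ∀ I : Finset (Fin n), ∑ i ∈ I, a i ≤ (theta D I : ℝ)}


theorem mpa_le (v : List Bool) : ∀ (u : List Bool) (o : ℕ),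
    matchedPairsAux (u ++ v) o ≤ o + u.count true + v.count false := by
  have h0 : ∀ (v : List Bool) (o : ℕ), matchedPairsAux v o ≤ v.count false := by
    intro v
    induction v with
    | nil => intro o; simp [matchedPairsAux]
    | cons b v ih =>
      intro o
      cases b
      · cases o with
        | zero => simp only [matchedPairsAux]; have := ih 0; simp; omega
        | succ o => simp only [matchedPairsAux]; have := ih o; simp; omega
      · simp only [matchedPairsAux]; have := ih (o+1); simp; omega
  intro u
  induction u with
  | nil => intro o; have := h0 v o; simp; omega
  | cons b u ih =>
    intro o
    cases b
    · cases o with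
      | zero => simp only [List.cons_append, matchedPairsAux]; have := ih 0; simp; omega
      | succ o => simp only [List.cons_append, matchedPairsAux]; have := ih o; simp; omega
    · simp only [List.cons_append, matchedPairsAux]; have := ih (o+1); simp; omega

theorem mpa_ge : ∀ (w : List Bool) (o : ℕ),
    (∃ u v, w = u ++ v ∧ o + u.count true + v.count false ≤ matchedPairsAux w o) ∨
      w.count false ≤ matchedPairsAux w o := by
  intro w
  induction w with
  | nil => intro o; right; simp
  | cons b w ih =>
    intro o
    cases b
    · cases o with
      | zero =>
        simp only [matchedPairsAux]
        rcases ih 0 with ⟨u, v, rfl, h⟩ | h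
        · left; exact ⟨false :: u, v, rfl, by simp at h ⊢; omega⟩
        · left; exact ⟨[false], w, rfl, by simp at h ⊢; omega⟩
      | succ o =>
        simp only [matchedPairsAux]
        rcases ih o with ⟨u, v, rfl, h⟩ | h
        · left; exact ⟨false :: u, v, rfl, by simp at h ⊢; omega⟩
        · right; simp; omega
    · simp only [matchedPairsAux]
      rcases ih (o+1) with ⟨u, v, rfl, h⟩ | h
      · left; exact ⟨true :: u, v, rfl, by simp at h ⊢; omega⟩
      · right; simp; omega

/-- Cut function. -/
def cutF {n : ℕ} (D : Finset (Fin n × Fin n)) (j : Fin n) (I : Finset (Fin n)) (m : ℕ) : ℕ :=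
  (I.filter fun i : Fin n => (i : ℕ) < m).card + ((colSet D j).filter fun i : Fin n => m ≤ (i : ℕ)).card

/-- The letter map. -/
def letter {n : ℕ} (D : Finset (Fin n × Fin n)) (j : Fin n) (I : Finset (Fin n)) (i : Fin n) :
    Option Bool :=
  if (i, j) ∈ D then (if i ∈ I then none else some false)
    else (if i ∈ I then some true else none)

theorem count_letter {n : ℕ} (D : Finset (Fin n × Fin n)) (j : Fin n) (I : Finset (Fin n))
    (b : Bool) (l : List (Fin n)) (hl : l.Nodup) :
    (l.filterMap (letter D j I)).count b =
      (univ.filter fun i => i ∈ l ∧ letter D j I i = some b).card := by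
  induction l with
  | nil => simp
  | cons x l ih =>
    have hx := (List.nodup_cons.1 hl).1
    have ih := ih (List.nodup_cons.1 hl).2
    by_cases h : letter D j I x = some b
    · have : (univ.filter fun i => i ∈ x :: l ∧ letter D j I i = some b) =
        insert x (univ.filter fun i => i ∈ l ∧ letter D j I i = some b) := by
        ext i; simp only [List.mem_cons, mem_filter, mem_univ, true_and, mem_insert]
        constructor
        · tauto
        · rintro (rfl | h1)
          · exact ⟨Or.inl rfl, h⟩
          · tauto
      rw [this, card_insert_of_notMem (by simp [hx]), List.filterMap_cons, h]
      simp [ih]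
    · have : (univ.filter fun i => i ∈ x :: l ∧ letter D j I i = some b) =
        (univ.filter fun i => i ∈ l ∧ letter D j I i = some b) := by
        ext i; simp only [List.mem_cons, mem_filter, mem_univ, true_and]
        constructor
        · rintro ⟨rfl | h1, h2⟩
          · exact absurd h2 h
          · tauto
        · tauto
      rw [this, ← ih, List.filterMap_cons]
      cases hc : letter D j I x with
      | none => rfl
      | some c =>
        have : c ≠ b := by rintro rfl; exact h hc
        simp [this]

theorem cut_count {n : ℕ} (D : Finset (Fin n × Fin n)) (j : Fin n) (I : Finset (Fin n)) (m : ℕ) :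
    (((List.finRange n).take m).filterMap (letter D j I)).count true +
    (((List.finRange n).drop m).filterMap (letter D j I)).count false + (colSet D j ∩ I).card =
    cutF D j I m := by
  rw [count_letter _ _ _ _ _ ((List.nodup_finRange n).sublist (List.take_sublist _ _)),
    count_letter _ _ _ _ _ ((List.nodup_finRange n).sublist (List.drop_sublist _ _))]
  have h1 : ∀ i : Fin n, i ∈ (List.finRange n).take m ↔ (i : ℕ) < m := by
    intro i
    simp only [List.mem_take_iff_getElem, List.getElem_finRange]
    constructor
    · rintro ⟨k, hk, rfl⟩; simp at hk ⊢; omega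
    · intro h; exact ⟨i, by simp; omega, by simp⟩
  have h2 : ∀ i : Fin n, i ∈ (List.finRange n).drop m ↔ m ≤ (i : ℕ) := by
    intro i
    simp only [List.mem_drop_iff_getElem, List.getElem_finRange]
    constructor
    · rintro ⟨k, hk, rfl⟩; simp
    · intro h; exact ⟨i - m, by simp; omega, by ext; simp; omega⟩
  have e1 : (univ.filter fun i => i ∈ (List.finRange n).take m ∧ letter D j I i = some true) =
      (I \ colSet D j).filter fun i : Fin n => (i : ℕ) < m := by
    ext i; simp only [h1, mem_filter, mem_univ, true_and, mem_sdiff, colSet, letter]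
    split_ifs <;> simp_all
  have e2 : (univ.filter fun i => i ∈ (List.finRange n).drop m ∧ letter D j I i = some false) =
      (colSet D j \ I).filter fun i : Fin n => m ≤ (i : ℕ) := by
    ext i; simp only [h2, mem_filter, mem_univ, true_and, mem_sdiff, colSet, letter]
    split_ifs <;> simp_all
  rw [e1, e2, cutF]
  have a1 : (I.filter fun i : Fin n => (i : ℕ) < m).card = ((I \ colSet D j).filter fun i : Fin n => (i : ℕ) < m).card
     + ((colSet D j ∩ I).filter fun i : Fin n => (i : ℕ) < m).card := by
    rw [← card_union_of_disjoint]
    · congr 1; ext i; simp; tauto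
    · rw [disjoint_left]; intro i; simp; tauto
  have a2 : ((colSet D j).filter fun i : Fin n => m ≤ (i : ℕ)).card =
     ((colSet D j \ I).filter fun i : Fin n => m ≤ (i : ℕ)).card
     + ((colSet D j ∩ I).filter fun i : Fin n => m ≤ (i : ℕ)).card := by
    rw [← card_union_of_disjoint]
    · congr 1; ext i; simp; tauto
    · rw [disjoint_left]; intro i; simp; tauto
  have a3 := card_filter_add_card_filter_not (s := colSet D j ∩ I) (fun i : Fin n => (i : ℕ) < m)
  simp only [not_lt] at a3
  omega

theorem thetaCol_le {n : ℕ} (D : Finset (Fin n × Fin n)) (j : Fin n) (I : Finset (Fin n)) (m : ℕ) :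
    thetaCol D j I ≤ cutF D j I m := by
  rw [← cut_count, thetaCol]
  gcongr
  have : colWord D j I = ((List.finRange n).take m).filterMap (letter D j I) ++
    ((List.finRange n).drop m).filterMap (letter D j I) := by
    rw [← List.filterMap_append, List.take_append_drop]; rfl
  rw [matchedPairs, this]
  have := mpa_le (((List.finRange n).drop m).filterMap (letter D j I))
    (((List.finRange n).take m).filterMap (letter D j I)) 0
  omega

theorem thetaCol_ge {n : ℕ} (D : Finset (Fin n × Fin n)) (j : Fin n) (I : Finset (Fin n)) :
    ∃ m, cutF D j I m ≤ thetaCol D j I := by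
  have hw : colWord D j I = (List.finRange n).filterMap (letter D j I) := rfl
  rcases mpa_ge (colWord D j I) 0 with ⟨u, v, h, h'⟩ | h
  · rw [hw, List.filterMap_eq_append_iff] at h
    obtain ⟨l1, l2, h, rfl, rfl⟩ := h
    refine ⟨l1.length, ?_⟩
    rw [← cut_count, thetaCol, matchedPairs, h]
    simp
    omega
  · refine ⟨0, ?_⟩
    rw [← cut_count, thetaCol, matchedPairs]
    rw [hw] at h ⊢
    simp
    omega

theorem theta_submod {n : ℕ} (D : Finset (Fin n × Fin n)) (A B : Finset (Fin n)) :
    theta D (A ∪ B) + theta D (A ∩ B) ≤ theta D A + theta D B := by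
  have key : ∀ j (A B : Finset (Fin n)) (m m' : ℕ), m ≤ m' →
      cutF D j (A ∪ B) m + cutF D j (A ∩ B) m' ≤ cutF D j A m + cutF D j B m' := by
    intro j A B m m' h
    unfold cutF
    have h1 := card_union_add_card_inter (A.filter fun i : Fin n => (i : ℕ) < m)
      ((A ∪ B).filter fun i : Fin n => (i : ℕ) < m)
    have h2 : ((A ∪ B).filter fun i : Fin n => (i : ℕ) < m).card + ((A ∩ B).filter fun i : Fin n => (i : ℕ) < m').card
      ≤ (A.filter fun i : Fin n => (i : ℕ) < m).card + (B.filter fun i : Fin n => (i : ℕ) < m').card := by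
      rw [← card_union_add_card_inter, ← card_union_add_card_inter (A.filter fun i : Fin n => (i : ℕ) < m)]
      gcongr ?_ + ?_
      · apply card_le_card; intro i; simp; rintro (h | h) <;> grind
      · apply card_le_card; intro i; simp; grind
    omega
  unfold theta
  rw [← sum_add_distrib, ← sum_add_distrib]
  apply sum_le_sum
  intro j _
  obtain ⟨m, hm⟩ := thetaCol_ge D j A
  obtain ⟨m', hm'⟩ := thetaCol_ge D j B
  rcases le_total m m' with h | h
  · have := key j A B m m' h
    have := thetaCol_le D j (A ∪ B) m
    have := thetaCol_le D j (A ∩ B) m'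
    omega
  · have := key j B A m' m h
    rw [union_comm, inter_comm] at this
    have := thetaCol_le D j (A ∪ B) m'
    have := thetaCol_le D j (A ∩ B) m
    omega

theorem card_filter_oe {n N : ℕ} (R : Finset (Fin n)) (h : R.card = N) (p : Fin n → Prop)
    [DecidablePred p] :
    (R.filter p).card = (univ.filter fun k : Fin N => p (R.orderEmbOfFin h k)).card := by
  rw [← card_map (R.orderEmbOfFin h).toEmbedding]
  congr 1
  ext x
  simp only [mem_filter, mem_map, mem_univ, true_and]
  constructor
  · rintro ⟨hx, hp⟩
    have : x ∈ Set.range (R.orderEmbOfFin h) := by rw [range_orderEmbOfFin]; exact hx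
    obtain ⟨k, rfl⟩ := this
    exact ⟨k, hp, rfl⟩
  · rintro ⟨k, hp, rfl⟩
    exact ⟨orderEmbOfFin_mem _ _ _, hp⟩

theorem domLE_iff {n : ℕ} (R S : Finset (Fin n)) :
    DomLE R S ↔ R.card = S.card ∧ ∀ m : ℕ,
      (R.filter fun i : Fin n => m ≤ (i : ℕ)).card ≤ (S.filter fun i : Fin n => m ≤ (i : ℕ)).card := by
  unfold DomLE
  apply and_congr_right
  intro h
  have h1 : (∀ (k : ℕ) (hR : k < (R.sort (· ≤ ·)).length) (hS : k < (S.sort (· ≤ ·)).length),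
      (R.sort (· ≤ ·)).get ⟨k, hR⟩ ≤ (S.sort (· ≤ ·)).get ⟨k, hS⟩) ↔
      ∀ k : Fin S.card, R.orderEmbOfFin h k ≤ S.orderEmbOfFin rfl k := by
    constructor
    · intro H k
      have := H k (by simp [h]) (by simp)
      simpa [orderEmbOfFin_apply] using this
    · intro H k hR hS
      have := H ⟨k, by simpa using hS⟩
      simpa [orderEmbOfFin_apply] using this
  rw [h1]
  constructor
  · intro H m
    rw [card_filter_oe R h, card_filter_oe S rfl]
    apply card_le_card
    intro k
    simp only [mem_filter, mem_univ, true_and]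
    intro hk
    exact hk.trans (H k)
  · intro H k
    by_contra hc
    push Not at hc
    have := H (R.orderEmbOfFin h k)
    rw [card_filter_oe R h, card_filter_oe S rfl] at this
    have h2 : (univ.filter fun k' : Fin S.card => ((R.orderEmbOfFin h k : Fin n) : ℕ) ≤ (S.orderEmbOfFin rfl k' : Fin n)) ⊂
      (univ.filter fun k' : Fin S.card => ((R.orderEmbOfFin h k : Fin n) : ℕ) ≤ (R.orderEmbOfFin h k' : Fin n)) := by
      rw [ssubset_iff_of_subset]
      · refine ⟨k, by simp, ?_⟩
        simp only [mem_filter, mem_univ, true_and, not_le]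
        exact hc
      · intro k'
        simp only [mem_filter, mem_univ, true_and, Fin.val_fin_le, OrderEmbedding.le_iff_le]
        intro hk
        by_contra hlt
        have : S.orderEmbOfFin rfl k' ≤ S.orderEmbOfFin rfl k := by
          rw [OrderEmbedding.le_iff_le]; exact (not_le.1 hlt).le
        exact absurd (hk.trans this) (not_le.2 hc)
    exact absurd this (not_le.2 (card_lt_card h2))

theorem card_inter_le_thetaCol {n : ℕ} (D : Finset (Fin n × Fin n)) (j : Fin n)
    (I B : Finset (Fin n)) (h : DomLE B (colSet D j)) : (B ∩ I).card ≤ thetaCol D j I := by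
  obtain ⟨m, hm⟩ := thetaCol_ge D j I
  refine le_trans ?_ hm
  have h1 := ((domLE_iff _ _).1 h).2 m
  have h2 := card_filter_add_card_filter_not (s := B ∩ I) (fun i : Fin n => (i : ℕ) < m)
  simp only [not_lt] at h2
  have h3 : ((B ∩ I).filter fun i : Fin n => (i : ℕ) < m).card ≤ (I.filter fun i : Fin n => (i : ℕ) < m).card :=
    card_le_card (filter_subset_filter _ inter_subset_right)
  have h4 : ((B ∩ I).filter fun i : Fin n => m ≤ (i : ℕ)).card ≤ (B.filter fun i : Fin n => m ≤ (i : ℕ)).card :=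
    card_le_card (filter_subset_filter _ inter_subset_left)
  unfold cutF
  omega

theorem sum_card_colSet {n : ℕ} (D : Finset (Fin n × Fin n)) :
    ∑ j, (colSet D j).card = D.card := by
  rw [card_eq_sum_card_fiberwise (f := Prod.snd) (t := univ) (by simp)]
  apply sum_congr rfl
  intro j _
  apply card_bij (fun i _ => (i, j))
  · simp [colSet]
  · simp
  · simp [colSet]
    grind

theorem sum_xi {n : ℕ} (C : Fin n → Finset (Fin n)) (I : Finset (Fin n)) :
    ∑ i ∈ I, (univ.filter fun j => i ∈ C j).card = ∑ j, (C j ∩ I).card := by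
  simp only [card_filter]
  rw [sum_comm]
  apply sum_congr rfl
  intro j _
  rw [← card_filter]
  congr 1; ext i; simp; tauto

theorem xi_mem {n : ℕ} (D : Finset (Fin n × Fin n)) (C : Fin n → Finset (Fin n))
    (hC : ∀ j, DomLE (C j) (colSet D j)) :
    (fun i => ((univ.filter fun j => i ∈ C j).card : ℝ)) ∈ schubitope D := by
  refine ⟨fun i => by positivity, ?_, ?_⟩
  · rw [← sum_card_colSet, ← Nat.cast_sum, sum_xi]
    congr 1
    apply sum_congr rfl
    intro j _
    rw [inter_univ, (hC j).1]
  · intro I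
    rw [← Nat.cast_sum, sum_xi, theta]
    exact_mod_cast sum_le_sum fun j _ => card_inter_le_thetaCol D j I (C j) (hC j)

/-- Hall target sets. -/
def hallT {n : ℕ} (D : Finset (Fin n × Fin n)) (a : Fin n → ℕ) (v : Fin n × Fin n) :
    Finset ((Fin n × Fin n) ⊕ (Fin n × Fin n)) :=
  (D.filter fun d => d.2 = v.2 ∧ v.1 ≤ d.1).disjSum
    (univ.filter fun s => s.1 = v.1 ∧ a v.1 ≤ (s.2 : ℕ))

theorem card_ge_fin (n c : ℕ) : (univ.filter fun k : Fin n => c ≤ (k : ℕ)).card = n - c := by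
  have h := card_filter_add_card_filter_not (s := (univ : Finset (Fin n))) (fun k => (k : ℕ) < c)
  have h2 : (univ.filter fun k : Fin n => (k : ℕ) < c).card = min n c := by
    rw [Fin.card_filter_val_lt]
  simp only [not_lt, card_univ, Fintype.card_fin] at h
  omega

theorem thetaCol_hall {n : ℕ} (D : Finset (Fin n × Fin n)) (j : Fin n) (I U : Finset (Fin n))
    (hU : U ⊆ I) : thetaCol D j I + U.card ≤
      I.card + ((colSet D j).filter fun d => ∃ i ∈ U, i ≤ d).card := by
  rcases U.eq_empty_or_nonempty with rfl | hne
  · have := thetaCol_le D j I n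
    have h2 : ((colSet D j).filter fun i : Fin n => n ≤ (i : ℕ)) = ∅ := by
      ext i; simp
    have h3 := card_filter_le I (fun i : Fin n => (i : ℕ) < n)
    unfold cutF at this
    rw [h2, card_empty] at this
    simp; omega
  · have := thetaCol_le D j I (U.min' hne)
    have h3 := card_filter_add_card_filter_not (s := I) (fun i : Fin n => (i : ℕ) < U.min' hne)
    have h4 : U.card ≤ (I.filter fun i : Fin n => ¬ (i : ℕ) < U.min' hne).card := by
      apply card_le_card
      intro i hi
      rw [mem_filter]
      exact ⟨hU hi, not_lt.2 (U.min'_le i hi)⟩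
    have h5 : ((colSet D j).filter fun i : Fin n => ((U.min' hne : Fin n) : ℕ) ≤ (i : ℕ)).card ≤
        ((colSet D j).filter fun d => ∃ i ∈ U, i ≤ d).card := by
      apply card_le_card
      intro i
      simp only [mem_filter]
      rintro ⟨h, h'⟩
      exact ⟨h, U.min' hne, U.min'_mem hne, h'⟩
    unfold cutF at this
    omega

theorem hall_cond {n : ℕ} (D : Finset (Fin n × Fin n)) (a : Fin n → ℕ)
    (ha : ∀ I, ∑ i ∈ I, a i ≤ theta D I) (W : Finset (Fin n × Fin n)) :
    W.card ≤ (W.biUnion (hallT D a)).card := by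
  set I := W.image Prod.fst with hI
  set N := fun j => (colSet D j).filter fun d => ∃ i ∈ colSet W j, i ≤ d with hN
  have hsub : (D.filter fun d => d.1 ∈ N d.2).disjSum
      ((univ : Finset (Fin n × Fin n)).filter fun s => s.1 ∈ I ∧ a s.1 ≤ (s.2 : ℕ)) ⊆
        W.biUnion (hallT D a) := by
    intro x hx
    rw [mem_biUnion]
    rcases x with ⟨d, j⟩ | ⟨i, k⟩
    · simp only [inl_mem_disjSum, mem_filter, hN, colSet, mem_univ, true_and] at hx
      obtain ⟨h1, h2, i, h3, h4⟩ := hx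
      exact ⟨(i, j), h3, by simp [hallT, h1, h4]⟩
    · simp only [inr_mem_disjSum, mem_filter, hI, mem_image, mem_univ, true_and] at hx
      obtain ⟨⟨⟨i', j⟩, h3, h4⟩, h5⟩ := hx
      simp only at h4 h5
      subst h4
      exact ⟨(i', j), h3, by simp [hallT, h5]⟩
  refine le_trans ?_ (card_le_card hsub)
  rw [card_disjSum]
  have c1 : (D.filter fun d => d.1 ∈ N d.2).card = ∑ j, (N j).card := by
    rw [← sum_card_colSet]
    apply sum_congr rfl
    intro j _
    congr 1
    ext d
    simp [colSet, hN]
  have c2 : ((univ : Finset (Fin n × Fin n)).filter fun s => s.1 ∈ I ∧ a s.1 ≤ (s.2 : ℕ)).card =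
      ∑ i ∈ I, (n - a i) := by
    rw [card_eq_sum_card_fiberwise (f := Prod.fst) (t := I) (by intro x; simp; tauto)]
    apply sum_congr rfl
    intro i hi
    rw [← card_ge_fin]
    symm
    apply card_bij (fun k _ => (i, k))
    · simp [hi]
    · simp
    · simp; grind
  rw [c1, c2]
  have h1 := sum_le_sum fun j (_ : j ∈ (univ : Finset (Fin n))) =>
    thetaCol_hall D j I (colSet W j) (by
      intro i; simp only [colSet, mem_filter, mem_univ, true_and, hI, mem_image]
      intro h; exact ⟨_, h, rfl⟩)
  rw [sum_add_distrib, sum_add_distrib, sum_card_colSet, sum_const, card_univ, Fintype.card_fin,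
    smul_eq_mul] at h1
  have h2 : I.card * n ≤ ∑ i ∈ I, (n - a i) + ∑ i ∈ I, a i := by
    rw [← sum_add_distrib, ← smul_eq_mul, ← sum_const]
    apply sum_le_sum; intro i _; omega
  have h3 := ha I
  unfold theta at h3
  rw [mul_comm] at h2
  change _ + W.card ≤ n * I.card + ∑ j, (N j).card at h1
  omega

theorem exists_C {n : ℕ} (D : Finset (Fin n × Fin n)) (a : Fin n → ℕ)
    (ha : ∀ I, ∑ i ∈ I, a i ≤ theta D I) (hs : ∑ i, a i = D.card) :
    ∃ C : Fin n → Finset (Fin n), (∀ j, DomLE (C j) (colSet D j)) ∧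
      ∀ i, (univ.filter fun j => i ∈ C j).card = a i := by
  obtain ⟨g, hg, hgt⟩ := (all_card_le_biUnion_card_iff_exists_injective (hallT D a)).1
    (hall_cond D a ha)
  set C : Fin n → Finset (Fin n) := fun j => univ.filter fun i => (g (i, j)).isLeft with hC
  have hL : ∀ i j, i ∈ C j → ∃ d, g (i, j) = Sum.inl (d, j) ∧ (d, j) ∈ D ∧ i ≤ d := by
    intro i j h
    simp only [hC, mem_filter, mem_univ, true_and] at h
    have h2 := hgt (i, j)
    cases hgv : g (i, j) with
    | inr x => simp [hgv] at h
    | inl x =>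
      obtain ⟨d, j'⟩ := x
      rw [hgv] at h2
      simp [hallT] at h2
      obtain ⟨h3, rfl, h4⟩ := h2
      exact ⟨d, rfl, h3, h4⟩
  have hR : ∀ i j, i ∉ C j → ∃ k : Fin n, g (i, j) = Sum.inr (i, k) ∧ a i ≤ (k : ℕ) := by
    intro i j h
    simp only [hC, mem_filter, mem_univ, true_and] at h
    have h2 := hgt (i, j)
    cases hgv : g (i, j) with
    | inl x => simp [hgv] at h
    | inr x =>
      obtain ⟨i', k⟩ := x
      rw [hgv] at h2
      simp [hallT] at h2
      obtain ⟨rfl, h4⟩ := h2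
      exact ⟨k, rfl, h4⟩
  have hcol : ∀ j (m : ℕ), ((C j).filter fun i : Fin n => m ≤ (i : ℕ)).card ≤
      ((colSet D j).filter fun i : Fin n => m ≤ (i : ℕ)).card := by
    intro j m
    choose! f hf1 hf2 hf3 using hL
    apply card_le_card_of_injOn (fun i => f i j)
    · intro i hi
      simp only [coe_filter, Set.mem_ofPred_eq] at hi
      simp only [coe_filter, Set.mem_ofPred_eq, colSet, mem_filter, mem_univ, true_and]
      exact ⟨hf2 i j hi.1, hi.2.trans (hf3 i j hi.1)⟩
    · intro i hi i' hi' h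
      simp only [coe_filter, Set.mem_ofPred_eq] at hi hi' h
      have := hg ((hf1 i j hi.1).trans ((by rw [h] : _ = _).trans (hf1 i' j hi'.1).symm))
      exact (Prod.ext_iff.1 this).1
  have hcol' : ∀ j, (C j).card ≤ (colSet D j).card := by
    intro j; simpa using hcol j 0
  have hrow : ∀ i, a i ≤ (univ.filter fun j => i ∈ C j).card := by
    intro i
    have h1 : (univ.filter fun j => ¬ i ∈ C j).card ≤
        (univ.filter fun k : Fin n => a i ≤ (k : ℕ)).card := by
      choose! f hf1 hf2 using hR
      apply card_le_card_of_injOn (fun j => f i j)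
      · intro j hj
        simp only [coe_filter, Set.mem_ofPred_eq, mem_univ, true_and] at hj ⊢
        exact hf2 i j hj
      · intro j hj j' hj' h
        simp only [coe_filter, Set.mem_ofPred_eq, mem_univ, true_and] at hj hj' h
        have := hg ((hf1 i j hj).trans ((by rw [h] : _ = _).trans (hf1 i j' hj').symm))
        exact (Prod.ext_iff.1 this).2
    rw [card_ge_fin] at h1
    have h2 := card_filter_add_card_filter_not (s := (univ : Finset (Fin n))) (fun j => i ∈ C j)
    rw [card_univ, Fintype.card_fin] at h2
    have h3 : a i ≤ n := by
      have := ha {i}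
      have h4 : theta D {i} ≤ ∑ j : Fin n, 1 := by
        apply sum_le_sum
        intro j _
        have := thetaCol_hall D j {i} ∅ (by simp)
        simpa using this
      simp at this h4
      omega
    omega
  have hsum := sum_xi C univ
  simp only [inter_univ] at hsum
  have e1 := sum_le_sum fun i (_ : i ∈ (univ : Finset (Fin n))) => hrow i
  have e2 := sum_le_sum fun j (_ : j ∈ (univ : Finset (Fin n))) => hcol' j
  rw [sum_card_colSet] at e2
  refine ⟨C, fun j => (domLE_iff _ _).2 ⟨?_, hcol j⟩, fun i => ?_⟩
  · have := (sum_eq_sum_iff_of_le fun j (_ : j ∈ (univ : Finset (Fin n))) => hcol' j).1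
      (by rw [sum_card_colSet]; omega)
    exact this j (mem_univ j)
  · have := (sum_eq_sum_iff_of_le fun i (_ : i ∈ (univ : Finset (Fin n))) => hrow i).1 (by omega)
    exact (this i (mem_univ i)).symm

theorem lattice_exists {n : ℕ} (D : Finset (Fin n × Fin n)) (p : Fin n → ℝ)
    (hp : p ∈ schubitope D) (hz : ∀ i, ∃ m : ℤ, p i = (m : ℝ)) :
    ∃ C : Fin n → Finset (Fin n),
        (∀ j, DomLE (C j) (colSet D j)) ∧
        p = fun i => ((Finset.univ.filter fun j => i ∈ C j).card : ℝ) := by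
  have : ∀ i, ∃ m : ℕ, p i = (m : ℝ) := by
    intro i
    obtain ⟨m, hm⟩ := hz i
    have h0 := hp.1 i
    rw [hm] at h0
    have h0 : 0 ≤ m := by exact_mod_cast h0
    lift m to ℕ using h0
    exact ⟨m, by rw [hm]; simp⟩
  choose a ha using this
  obtain ⟨C, hC, h⟩ := exists_C D a (by
    intro I
    have := hp.2.2 I
    simp only [ha] at this
    exact_mod_cast this) (by
    have := hp.2.1
    simp only [ha] at this
    exact_mod_cast this)
  refine ⟨C, hC, ?_⟩
  ext i
  rw [h, ha]

theorem theta_empty {n : ℕ} (D : Finset (Fin n × Fin n)) : theta D ∅ = 0 := by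
  apply sum_eq_zero
  intro j _
  have := thetaCol_hall D j ∅ ∅ (by simp)
  simpa using this

theorem theta_univ {n : ℕ} (D : Finset (Fin n × Fin n)) : theta D univ ≤ D.card := by
  rw [← sum_card_colSet]
  apply sum_le_sum
  intro j _
  have := thetaCol_le D j univ 0
  simpa [cutF] using this

theorem convex_schubitope {n : ℕ} (D : Finset (Fin n × Fin n)) : Convex ℝ (schubitope D) := by
  intro x hx y hy s t hs ht hst
  refine ⟨fun i => ?_, ?_, fun I => ?_⟩
  · have := hx.1 i; have := hy.1 i
    simp only [Pi.add_apply, Pi.smul_apply, smul_eq_mul]; positivity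
  · simp only [Pi.add_apply, Pi.smul_apply, smul_eq_mul, sum_add_distrib, ← mul_sum, hx.2.1, hy.2.1]
    rw [← add_mul, hst, one_mul]
  · simp only [Pi.add_apply, Pi.smul_apply, smul_eq_mul, sum_add_distrib, ← mul_sum]
    calc _ ≤ s * (theta D I : ℝ) + t * theta D I := by
          gcongr
          · exact hx.2.2 I
          · exact hy.2.2 I
      _ = _ := by rw [← add_mul, hst, one_mul]

theorem compact_schubitope {n : ℕ} (D : Finset (Fin n × Fin n)) : IsCompact (schubitope D) := by
  apply IsCompact.of_isClosed_subset (s := Set.Icc (0 : Fin n → ℝ) (fun _ => (D.card : ℝ)))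
    isCompact_Icc
  · have : schubitope D = (⋂ i, {a : Fin n → ℝ | 0 ≤ a i}) ∩ ({a : Fin n → ℝ | ∑ i, a i = (D.card : ℝ)} ∩
        ⋂ I : Finset (Fin n), {a : Fin n → ℝ | ∑ i ∈ I, a i ≤ (theta D I : ℝ)}) := by
      ext a; simp [schubitope]
    rw [this]
    refine (isClosed_iInter fun i => isClosed_le (by fun_prop) (by fun_prop)).inter
      ((isClosed_eq (by fun_prop) (by fun_prop)).inter
      (isClosed_iInter fun i => isClosed_le (by fun_prop) (by fun_prop)))
  · intro a ha
    refine ⟨fun i => ha.1 i, fun i => ?_⟩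
    rw [← ha.2.1]
    exact single_le_sum (fun i _ => ha.1 i) (mem_univ i)

theorem extreme_integral {n : ℕ} (D : Finset (Fin n × Fin n)) (p : Fin n → ℝ)
    (hp : p ∈ (schubitope D).extremePoints ℝ) (i : Fin n) : ∃ m : ℤ, p i = (m : ℝ) := by
  classical
  by_contra hi
  obtain ⟨hpS, hpe⟩ := mem_extremePoints.1 hp
  set T : Finset (Finset (Fin n)) := univ.filter fun A =>
    ∑ i ∈ A, p i = (theta D A : ℝ) ∧ ∃ i ∈ A, ¬ ∃ m : ℤ, p i = (m : ℝ) with hT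
  have hTne : T.Nonempty := by
    refine ⟨univ, ?_⟩
    simp only [hT, mem_filter, mem_univ, true_and]
    refine ⟨le_antisymm (hpS.2.2 _) ?_, i, hi⟩
    rw [hpS.2.1]; exact_mod_cast theta_univ D
  obtain ⟨A, hAT, hmin⟩ := exists_min_image T card hTne
  simp only [hT, mem_filter, mem_univ, true_and] at hAT hmin
  obtain ⟨hAt, x, hxA, hx⟩ := hAT
  -- a second fractional element
  have : ∃ y ∈ A, y ≠ x ∧ ¬ ∃ m : ℤ, p y = (m : ℝ) := by
    by_contra hcon
    push Not at hcon
    apply hx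
    choose! f hf using hcon
    refine ⟨(theta D A : ℤ) - ∑ y ∈ A.erase x, f y, ?_⟩
    push_cast
    rw [← hAt, ← add_sum_erase _ _ hxA, sum_congr rfl (g := fun y => (f y : ℝ))]
    · ring
    · intro y hy
      exact hf y (mem_of_mem_erase hy) (ne_of_mem_erase hy)
  obtain ⟨y, hyA, hyx, hy⟩ := this
  have hsep : ∀ B : Finset (Fin n), ∑ i ∈ B, p i = (theta D B : ℝ) → (x ∈ B ↔ y ∈ B) := by
    intro B hB
    have hAB : ∑ i ∈ A ∩ B, p i = (theta D (A ∩ B) : ℝ) := by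
      apply le_antisymm (hpS.2.2 _)
      have h1 := sum_union_inter (s₁ := A) (s₂ := B) (f := p)
      have h2 := hpS.2.2 (A ∪ B)
      have h3 : ((theta D (A ∪ B) : ℝ) + theta D (A ∩ B)) ≤ theta D A + theta D B := by
        exact_mod_cast theta_submod D A B
      linarith
    by_contra hne
    have hlt : (A ∩ B).card < A.card := by
      apply card_lt_card
      rw [ssubset_iff_of_subset inter_subset_left]
      by_cases h : x ∈ B
      · exact ⟨y, hyA, by simp; tauto⟩
      · exact ⟨x, hxA, by simp; tauto⟩
    apply absurd (hmin (A ∩ B) ⟨hAB, ?_⟩) (not_le.2 hlt)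
    by_cases h : x ∈ B
    · exact ⟨x, by simp [hxA, h], hx⟩
    · exact ⟨y, by simp [hyA]; tauto, hy⟩
  -- epsilon
  have hpos : ∀ z, (¬ ∃ m : ℤ, p z = (m : ℝ)) → 0 < p z := by
    intro z hz
    apply lt_of_le_of_ne (hpS.1 z)
    intro h
    exact hz ⟨0, by simp [← h]⟩
  obtain ⟨ε, hε, hεx, hεy, hεB⟩ : ∃ ε : ℝ, 0 < ε ∧ ε ≤ p x ∧ ε ≤ p y ∧
      ∀ B : Finset (Fin n), ∑ i ∈ B, p i ≠ (theta D B : ℝ) → ∑ i ∈ B, p i + ε ≤ theta D B := by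
    set S : Finset (Finset (Fin n)) := univ.filter fun B => ∑ i ∈ B, p i ≠ (theta D B : ℝ) with hS
    set V : Finset ℝ := insert (p x) (insert (p y) (S.image fun B => (theta D B : ℝ) - ∑ i ∈ B, p i))
      with hV
    have hVne : V.Nonempty := ⟨p x, by simp [hV]⟩
    refine ⟨V.min' hVne, ?_, V.min'_le _ (by simp [hV]), V.min'_le _ (by simp [hV]), ?_⟩
    · rw [lt_min'_iff]
      intro v hv
      simp only [hV, mem_insert, mem_image, hS, mem_filter, mem_univ, true_and] at hv
      rcases hv with rfl | rfl | ⟨B, hB, rfl⟩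
      · exact hpos _ hx
      · exact hpos _ hy
      · exact sub_pos.2 (lt_of_le_of_ne (hpS.2.2 B) hB)
    · intro B hB
      have := V.min'_le ((theta D B : ℝ) - ∑ i ∈ B, p i) (by
        simp only [hV, mem_insert, mem_image, hS, mem_filter, mem_univ, true_and]
        exact Or.inr (Or.inr ⟨B, hB, rfl⟩))
      linarith
  have hmem : ∀ (x y : Fin n), y ≠ x → (∀ B : Finset (Fin n), ∑ i ∈ B, p i = (theta D B : ℝ) → (x ∈ B ↔ y ∈ B)) → ε ≤ p y →
      p + ε • (Pi.single x 1 - Pi.single y 1 : Fin n → ℝ) ∈ schubitope D := by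
    intro x y hyx hsep hεy
    have hs : ∀ B : Finset (Fin n), ∑ i ∈ B, (p + ε • (Pi.single x 1 - Pi.single y 1 : Fin n → ℝ)) i =
        ∑ i ∈ B, p i + ε * ((if x ∈ B then 1 else 0) - (if y ∈ B then 1 else 0)) := by
      intro B
      simp only [Pi.add_apply, Pi.smul_apply, Pi.sub_apply, smul_eq_mul, sum_add_distrib, ← mul_sum,
        sum_sub_distrib, Pi.single_apply, sum_ite_eq']
    refine ⟨fun i => ?_, ?_, fun B => ?_⟩
    · have h0 := hpS.1 i
      simp only [Pi.add_apply, Pi.smul_apply, Pi.sub_apply, smul_eq_mul, Pi.single_apply]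
      by_cases h1 : i = x
      · have : i ≠ y := by rw [h1]; exact hyx.symm
        simp only [h1, if_true, if_neg (h1 ▸ this)]
        have := hpS.1 x
        linarith
      · by_cases h2 : i = y
        · simp only [h2, if_true, if_neg (h2 ▸ h1)]
          linarith
        · simp [h1, h2, h0]
    · rw [hs]; simp [hpS.2.1]
    · rw [hs]
      by_cases hB : ∑ i ∈ B, p i = (theta D B : ℝ)
      · have := hsep B hB
        by_cases h : x ∈ B
        · simp [h, this.1 h, hB]
        · have h' : y ∉ B := fun h' => h (this.2 h')
          simp [h, h', hB]
      · have := hεB B hB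
        split_ifs <;> linarith
  have m1 := hmem x y hyx hsep hεy
  have m2 := hmem y x hyx.symm (fun B hB => (hsep B hB).symm) hεx
  have := (hpe _ m1 _ m2 ⟨1/2, 1/2, by norm_num, by norm_num, by norm_num, by
    ext k; simp; ring⟩).1
  have h := congrFun this x
  simp [hyx.symm] at h
  linarith

/-- The lattice points of the Schubitope `S_D` are exactly the vectors `ξ^C`,
`ξ^C_i = #{j : i ∈ C_j}`, over tuples `C = (C_1, …, C_n)` with `C_j ≤ D_j` for all `j`;
moreover `S_D` is the convex hull of this set of lattice points. -/
theorem stmt7 (n : ℕ) (D : Finset (Fin n × Fin n)) :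
    ({p : Fin n → ℝ | p ∈ schubitope D ∧ ∀ i, ∃ m : ℤ, p i = (m : ℝ)} =
      {p : Fin n → ℝ | ∃ C : Fin n → Finset (Fin n),
        (∀ j, DomLE (C j) (colSet D j)) ∧
        p = fun i => ((Finset.univ.filter fun j => i ∈ C j).card : ℝ)}) ∧
    schubitope D =
      convexHull ℝ {p : Fin n → ℝ | ∃ C : Fin n → Finset (Fin n),
        (∀ j, DomLE (C j) (colSet D j)) ∧
        p = fun i => ((Finset.univ.filter fun j => i ∈ C j).card : ℝ)} := by
  constructor
  · ext p
    constructor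
    · rintro ⟨hp, hz⟩
      exact lattice_exists D p hp hz
    · rintro ⟨C, hC, rfl⟩
      exact ⟨xi_mem D C hC, fun i => ⟨((univ.filter fun j => i ∈ C j).card : ℤ), by simp⟩⟩
  · apply subset_antisymm
    · have hfin : {p : Fin n → ℝ | ∃ C : Fin n → Finset (Fin n),
        (∀ j, DomLE (C j) (colSet D j)) ∧
        p = fun i => ((Finset.univ.filter fun j => i ∈ C j).card : ℝ)}.Finite := by
        apply (Set.finite_range (fun (C : Fin n → Finset (Fin n)) (i : Fin n) =>
          ((Finset.univ.filter fun j => i ∈ C j).card : ℝ))).subset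
        rintro p ⟨C, _, rfl⟩
        exact ⟨C, rfl⟩
      conv_lhs => rw [← closure_convexHull_extremePoints (compact_schubitope D) (convex_schubitope D)]
      apply closure_minimal _ (hfin.isCompact_convexHull ℝ).isClosed
      apply convexHull_mono
      intro p hp
      exact lattice_exists D p hp.1 (extreme_integral D p hp)
    · apply convexHull_min _ (convex_schubitope D)
      rintro p ⟨C, hC, rfl⟩
      exact xi_mem D C hC
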